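/- Let G^(1), G^(2) be templates, W^(1) ⊆ V^(1), W^(2) ⊆ V^(2), and let M̲ be a set of node matches. Then the number of matchings M in the shadow class M_shadow(W^(1),W^(2),M̲) — i.e., matchings M whose set of semi-matched pairs equals M̲ and whose unmatched node sets in G^(1) and G^(2) are exactly W^(1) and W^(2) — satisfies |M_shadow(W^(1),W^(2),M̲)| ≤ min(|Aut(G^(1))|, |Aut(G^(2))|). -/

import Mathlib

/-!
Fix one matching `N` of the shadow class. Any other matching `M` of the class leaves the same nodes
unmatched, so sending a matched node `a` to the node whose partner in `N` is the partner of `a` in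
`M`, and fixing the unmatched nodes, is a permutation of the nodes of the first graph (`Transfer`).
It determines `M`, as `N` is fixed, and it fixes the distinguished nodes.

It is a graph automorphism (`Transfer.adj`). If an edge is unmatched in `M`, each endpoint is
unmatched or lies in a semi-matched pair; such pairs are common to `M` and `N`, so both endpoints
are fixed. If it is matched to an edge of the second graph which is matched in `N` too, the image
is an edge. If that edge is unmatched in `N`, its endpoints lie in semi-matched pairs of `N`, hence
of `M`, and both endpoints are again fixed.

Hence the class injects into the automorphism group of the first graph (`card_le_aut`). The
situation is symmetric in the two graphs, which gives the bound by the minimum.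
-/

open Classical Finset

noncomputable section

namespace SBM

/-- Index type for the edge slots of a graph on `n` nodes: ordered pairs `i < j`. -/
abbrev Pairs (n : ℕ) := {p : Fin n × Fin n // p.1 < p.2}

/-- A configuration of edges: one Boolean per pair `i < j`. -/
abbrev EdgeConf (n : ℕ) := Pairs n → Bool

/-- Community labels of the `n` nodes, with `K` communities. -/
abbrev Lab (n K : ℕ) := Fin n → Fin K

/-- The recentered symmetric adjacency entries `Y i j = Y*_{ij} - q` (and `0` on the diagonal). -/
def Ymat (n : ℕ) (q : ℝ) (y : EdgeConf n) (i j : Fin n) : ℝ :=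
  if h : i = j then 0
  else (if y ⟨(min i j, max i j), min_lt_max.mpr h⟩ then 1 else 0) - q

/-- Conditional connection probability of a pair given the labels. -/
def pEdge (n K : ℕ) (q lam : ℝ) (z : Lab n K) (p : Pairs n) : ℝ :=
  if z p.1.1 = z p.1.2 then q + lam else q

/-- SBM probability weight of a configuration `(z, y)`: labels are i.i.d. uniform on `Fin K`
and, conditionally on `z`, edges are independent Bernoulli. -/
def wt (n K : ℕ) (q lam : ℝ) (z : Lab n K) (y : EdgeConf n) : ℝ :=
  ((K : ℝ)⁻¹) ^ n *
    ∏ p : Pairs n, (if y p then pEdge n K q lam z p else 1 - pEdge n K q lam z p)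

/-- Expectation under the SBM. -/
def expec (n K : ℕ) (q lam : ℝ) (F : Lab n K → EdgeConf n → ℝ) : ℝ :=
  ∑ z : Lab n K, ∑ y : EdgeConf n, wt n K q lam z y * F z y

/-- Expectation conditionally on `z i = z j`. -/
def expecEq (n K : ℕ) (q lam : ℝ) (i j : Fin n) (F : Lab n K → EdgeConf n → ℝ) : ℝ :=
  expec n K q lam (fun z y => if z i = z j then F z y else 0) /
    expec n K q lam (fun z _ => if z i = z j then 1 else 0)

/-- Expectation conditionally on `z i ≠ z j`. -/
def expecNe (n K : ℕ) (q lam : ℝ) (i j : Fin n) (F : Lab n K → EdgeConf n → ℝ) : ℝ :=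
  expec n K q lam (fun z y => if z i ≠ z j then F z y else 0) /
    expec n K q lam (fun z _ => if z i ≠ z j then 1 else 0)

/-- Variance conditionally on `z i = z j`. -/
def varEq (n K : ℕ) (q lam : ℝ) (i j : Fin n) (F : Lab n K → EdgeConf n → ℝ) : ℝ :=
  expecEq n K q lam i j (fun z y => F z y ^ 2) - expecEq n K q lam i j F ^ 2

/-- Variance conditionally on `z i ≠ z j`. -/
def varNe (n K : ℕ) (q lam : ℝ) (i j : Fin n) (F : Lab n K → EdgeConf n → ℝ) : ℝ :=
  expecNe n K q lam i j (fun z y => F z y ^ 2) - expecNe n K q lam i j F ^ 2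

/-- The (centered) membership indicator `x = 1{z i0 = z i1} - 1/K`. -/
def xind (n K : ℕ) (i0 i1 : Fin n) (z : Lab n K) : ℝ :=
  (if z i0 = z i1 then 1 else 0) - 1 / K

/-- A template: a finite simple graph on `Fin v` (edges stored as ordered pairs `a < b`)
with the two distinguished nodes `0` and `1`. -/
structure Template where
  v : ℕ
  hv : 2 ≤ v
  E : Finset (Fin v × Fin v)
  hE : ∀ e ∈ E, e.1 < e.2

namespace Template

/-- First distinguished node. -/
def v1 (T : Template) : Fin T.v := ⟨0, by have := T.hv; omega⟩

/-- Second distinguished node. -/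
def v2 (T : Template) : Fin T.v := ⟨1, by have := T.hv; omega⟩

/-- The underlying simple graph of a template. -/
def graph (T : Template) : SimpleGraph (Fin T.v) :=
  SimpleGraph.fromRel fun a b => (a, b) ∈ T.E

end Template

/-- Labelings `Π_V`: injections sending the distinguished nodes to the nodes `0` and `1`. -/
def PiV (n : ℕ) (hn : 2 ≤ n) (T : Template) : Finset (Fin T.v ↪ Fin n) :=
  Finset.univ.filter fun π =>
    π T.v1 = (⟨0, by omega⟩ : Fin n) ∧ π T.v2 = (⟨1, by omega⟩ : Fin n)

/-- The monomial `P_{G,π}(Y) = ∏_{(u,w) ∈ E} Y_{π u, π w}`. -/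
def PG (n : ℕ) (q : ℝ) (T : Template) (π : Fin T.v ↪ Fin n) (y : EdgeConf n) : ℝ :=
  ∏ e ∈ T.E, Ymat n q y (π e.1) (π e.2)

/-- A matching between the node sets of two templates: no node appears twice. -/
def IsMatching (T1 T2 : Template) (M : Finset (Fin T1.v × Fin T2.v)) : Prop :=
  (∀ p ∈ M, ∀ p' ∈ M, (p : Fin T1.v × Fin T2.v).1 = (p' : Fin T1.v × Fin T2.v).1 → p = p') ∧
  (∀ p ∈ M, ∀ p' ∈ M, (p : Fin T1.v × Fin T2.v).2 = (p' : Fin T1.v × Fin T2.v).2 → p = p')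

/-- `Π(M)`: pairs of labelings compatible with the matching `M`. -/
def PiM (n : ℕ) (hn : 2 ≤ n) (T1 T2 : Template) (M : Finset (Fin T1.v × Fin T2.v)) :
    Set ((Fin T1.v ↪ Fin n) × (Fin T2.v ↪ Fin n)) :=
  {pp | pp.1 ∈ PiV n hn T1 ∧ pp.2 ∈ PiV n hn T2 ∧
    ∀ (a : Fin T1.v) (b : Fin T2.v), pp.1 a = pp.2 b ↔ (a, b) ∈ M}

/-- An edge of `T1` is matched if its two endpoints are matched to the endpoints of an
edge of `T2`. -/
def EdgeMatched1 (T1 T2 : Template) (M : Finset (Fin T1.v × Fin T2.v))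
    (e : Fin T1.v × Fin T1.v) : Prop :=
  ∃ e' ∈ T2.E, ((e.1, e'.1) ∈ M ∧ (e.2, e'.2) ∈ M) ∨ ((e.1, e'.2) ∈ M ∧ (e.2, e'.1) ∈ M)

/-- An edge of `T2` is matched if its two endpoints are matched to the endpoints of an
edge of `T1`. -/
def EdgeMatched2 (T1 T2 : Template) (M : Finset (Fin T1.v × Fin T2.v))
    (e' : Fin T2.v × Fin T2.v) : Prop :=
  ∃ e ∈ T1.E, ((e.1, e'.1) ∈ M ∧ (e.2, e'.2) ∈ M) ∨ ((e.1, e'.2) ∈ M ∧ (e.2, e'.1) ∈ M)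

/-- `|E_Δ|`: the number of unmatched edges (in either template). -/
def EDeltaCard (T1 T2 : Template) (M : Finset (Fin T1.v × Fin T2.v)) : ℕ :=
  (T1.E.filter fun e => ¬ EdgeMatched1 T1 T2 M e).card +
    (T2.E.filter fun e => ¬ EdgeMatched2 T1 T2 M e).card

/-- `|U^{(1)}|`: the number of unmatched nodes of the first template. -/
def U1card (T1 T2 : Template) (M : Finset (Fin T1.v × Fin T2.v)) : ℕ :=
  (Finset.univ.filter fun a : Fin T1.v => ∀ p ∈ M, (p : Fin T1.v × Fin T2.v).1 ≠ a).card

/-- `|U^{(2)}|`: the number of unmatched nodes of the second template. -/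
def U2card (T1 T2 : Template) (M : Finset (Fin T1.v × Fin T2.v)) : ℕ :=
  (Finset.univ.filter fun b : Fin T2.v => ∀ p ∈ M, (p : Fin T1.v × Fin T2.v).2 ≠ b).card

/-- A pair of matched nodes is semi-matched if one of them is incident to an unmatched edge. -/
def IsSemiMatched (T1 T2 : Template) (M : Finset (Fin T1.v × Fin T2.v))
    (p : Fin T1.v × Fin T2.v) : Prop :=
  (∃ e ∈ T1.E, (e.1 = p.1 ∨ e.2 = p.1) ∧ ¬ EdgeMatched1 T1 T2 M e) ∨
  (∃ e' ∈ T2.E, (e'.1 = p.2 ∨ e'.2 = p.2) ∧ ¬ EdgeMatched2 T1 T2 M e')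

/-- `M_SM`: the semi-matched pairs of `M`. -/
def MSM (T1 T2 : Template) (M : Finset (Fin T1.v × Fin T2.v)) :
    Finset (Fin T1.v × Fin T2.v) :=
  M.filter (IsSemiMatched T1 T2 M)

/-- `M_PM`: the perfectly matched pairs of `M`. -/
def MPM (T1 T2 : Template) (M : Finset (Fin T1.v × Fin T2.v)) :
    Finset (Fin T1.v × Fin T2.v) :=
  M.filter fun p => ¬ IsSemiMatched T1 T2 M p

/-- A node is isolated if it is incident to no edge. -/
def IsIsolated (T : Template) (w : Fin T.v) : Prop :=
  ∀ e ∈ T.E, e.1 ≠ w ∧ e.2 ≠ w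

/-- The pruned matching `M⁻`: remove the pair of first (resp. second) distinguished nodes
whenever that node is isolated in `T1` or in `T2`. -/
def Mminus (T1 T2 : Template) (M : Finset (Fin T1.v × Fin T2.v)) :
    Finset (Fin T1.v × Fin T2.v) :=
  M.filter fun p =>
    ¬ ((p = (T1.v1, T2.v1) ∧ (IsIsolated T1 T1.v1 ∨ IsIsolated T2 T2.v1)) ∨
       (p = (T1.v2, T2.v2) ∧ (IsIsolated T1 T1.v2 ∨ IsIsolated T2 T2.v2)))

/-- `M ∈ M*`: every connected component of `T1` and of `T2` meets the pruned matching. -/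
def InMstar (T1 T2 : Template) (M : Finset (Fin T1.v × Fin T2.v)) : Prop :=
  (∀ w : Fin T1.v, ∃ p ∈ Mminus T1 T2 M, T1.graph.Reachable w p.1) ∧
  (∀ w : Fin T2.v, ∃ p ∈ Mminus T1 T2 M, T2.graph.Reachable w p.2)


/-- Canonical representative (the minimum) of the connected component of `w`. -/
def compRep (T : Template) (w : Fin T.v) : Fin T.v :=
  (Finset.univ.filter fun u => T.graph.Reachable w u).min'
    ⟨w, by
      simp only [Finset.mem_filter, Finset.mem_univ, true_and]
      exact SimpleGraph.Reachable.refl w⟩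

/-- The edges of the connected component of `w`. -/
def compEdges (T : Template) (w : Fin T.v) : Finset (Fin T.v × Fin T.v) :=
  T.E.filter fun e => T.graph.Reachable e.1 w

/-- The monomial attached to the connected component of `w`. -/
def Pcomp (n : ℕ) (q : ℝ) (T : Template) (π : Fin T.v ↪ Fin n) (w : Fin T.v)
    (y : EdgeConf n) : ℝ :=
  ∏ e ∈ compEdges T w, Ymat n q y (π e.1) (π e.2)

/-- Representatives of the connected components of `T` containing at least one edge. -/
def edgeCompReps (T : Template) : Finset (Fin T.v) :=
  Finset.univ.filter fun w => compRep T w = w ∧ ∃ e ∈ T.E, T.graph.Reachable e.1 w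

/-- The centered polynomial `P̄_{G,π} = ∏_l (P_{G_l,π} - E[P_{G_l,π}])`, the product running
over the connected components with at least one edge. -/
def Pbar (n K : ℕ) (q lam : ℝ) (T : Template) (π : Fin T.v ↪ Fin n) (y : EdgeConf n) : ℝ :=
  ∏ w ∈ edgeCompReps T,
    (Pcomp n q T π w y - expec n K q lam fun _ y' => Pcomp n q T π w y')

/-- `|Aut(G)|`: the number of automorphisms of the template fixing both distinguished nodes. -/
def autCard (T : Template) : ℕ :=
  Nat.card {σ : Equiv.Perm (Fin T.v) //
    σ T.v1 = T.v1 ∧ σ T.v2 = T.v2 ∧ ∀ a b, T.graph.Adj a b ↔ T.graph.Adj (σ a) (σ b)}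

/-- The variance proxy `𝕍(G) = ((n-2)!/(n-|V|)!) |Aut(G)| E[P_{G,π}²]
  = |Aut(G)| ∑_{π ∈ Π_V} E[P_{G,π}²]`. -/
def VG (n K : ℕ) (hn : 2 ≤ n) (q lam : ℝ) (T : Template) : ℝ :=
  autCard T * ∑ π ∈ PiV n hn T, expec n K q lam fun _ y => PG n q T π y ^ 2

/-- The normalized invariant polynomial `Ψ_G = P̄_G / √𝕍(G)`. -/
def Psi (n K : ℕ) (hn : 2 ≤ n) (q lam : ℝ) (T : Template) (y : EdgeConf n) : ℝ :=
  (∑ π ∈ PiV n hn T, Pbar n K q lam T π y) / Real.sqrt (VG n K hn q lam T)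

/-- A template suitable for `𝒢_{≤D}`: between `1` and `D` edges, and no isolated node
except possibly the distinguished ones. -/
def GoodTemplate (D : ℕ) (T : Template) : Prop :=
  1 ≤ T.E.card ∧ T.E.card ≤ D ∧
    ∀ w : Fin T.v, w ≠ T.v1 → w ≠ T.v2 → ¬ IsIsolated T w

/-- Equivalence of templates: a graph isomorphism mapping distinguished nodes to
distinguished nodes. -/
def TEquiv (T1 T2 : Template) : Prop :=
  ∃ σ : Fin T1.v ≃ Fin T2.v, σ T1.v1 = T2.v1 ∧ σ T1.v2 = T2.v2 ∧
    ∀ a b, T1.graph.Adj a b ↔ T2.graph.Adj (σ a) (σ b)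

/-- `𝒢` is a valid choice for `𝒢_{≤D}`: a maximal collection of pairwise non-equivalent
good templates. -/
def IsTemplateBasis (D : ℕ) (𝒢 : Set Template) : Prop :=
  (∀ T ∈ 𝒢, GoodTemplate D T) ∧
  (∀ T1 ∈ 𝒢, ∀ T2 ∈ 𝒢, TEquiv T1 T2 → T1 = T2) ∧
  ∀ T, GoodTemplate D T → ∃ T' ∈ 𝒢, TEquiv T T'

/-- A matching containing the pairs of distinguished nodes. -/
def IsMatching12 (T1 T2 : Template) (M : Finset (Fin T1.v × Fin T2.v)) : Prop :=
  IsMatching T1 T2 M ∧ (T1.v1, T2.v1) ∈ M ∧ (T1.v2, T2.v2) ∈ M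

/-- The edit distance `d(G^{(1)}, G^{(2)}) = min_M |E_Δ|`. -/
def editDist (T1 T2 : Template) : ℕ :=
  sInf {k : ℕ | ∃ M : Finset (Fin T1.v × Fin T2.v),
    IsMatching12 T1 T2 M ∧ k = EDeltaCard T1 T2 M}


/-- The relation sending `a` to `a'` when the partner of `a` in `M` is the partner of `a'` in `N`,
and fixing every `a` that `M` leaves unmatched. -/
def Transfer {α β : Type*} (M N : α → β → Prop) (a a' : α) : Prop :=
  (∃ b, M a b ∧ N a' b) ∨ ((∀ b, ¬ M a b) ∧ a' = a)

/-- What is used of two matchings `M`, `N` with the same shadow: both are partial injections, every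
node matched by `M` is matched by `N`, and an edge that `M` does not match has both its endpoints
either unmatched in `M` or matched in `N` as in `M`. -/
structure SameShadow {α β : Type*} (G : SimpleGraph α) (H : SimpleGraph β)
    (M N : α → β → Prop) : Prop where
  right_unique : ∀ {a b b'}, M a b → M a b' → b = b'
  left_unique : ∀ {a a' b}, M a b → M a' b → a = a'
  left : ∀ {a b}, M a b → ∃ b', N a b'
  right : ∀ {a b}, M a b → ∃ a', N a' b
  edge_left : ∀ {a c}, G.Adj a c → (∃ b d, M a b ∧ M c d ∧ H.Adj b d) ∨
    ((∀ b, M a b → N a b) ∧ (∀ d, M c d → N c d))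
  edge_right : ∀ {b d}, H.Adj b d → (∃ a c, M a b ∧ M c d ∧ G.Adj a c) ∨
    ((∀ a, M a b → N a b) ∧ (∀ c, M c d → N c d))

/-- `SameShadow` is symmetric under exchanging the two graphs. -/
lemma SameShadow.flip {α β : Type*} {G : SimpleGraph α} {H : SimpleGraph β}
    {M N : α → β → Prop} (h : SameShadow G H M N) :
    SameShadow H G (fun b a => M a b) (fun b a => N a b) where
  right_unique := h.left_unique
  left_unique := h.right_unique
  left := h.right
  right := h.left
  edge_left := h.edge_right
  edge_right := h.edge_left

section Transfer

variable {α β : Type*} {G : SimpleGraph α} {H : SimpleGraph β} {M N : α → β → Prop}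

lemma Transfer.exists (h : SameShadow G H M N) (a : α) : ∃ a', Transfer M N a a' := by
  by_cases ha : ∃ b, M a b
  · obtain ⟨b, hb⟩ := ha
    obtain ⟨a', ha'⟩ := h.right hb
    exact ⟨a', Or.inl ⟨b, hb, ha'⟩⟩
  · exact ⟨a, Or.inr ⟨fun b hb => ha ⟨b, hb⟩, rfl⟩⟩

lemma Transfer.unique (h : SameShadow G H M N) (h' : SameShadow G H N M) {a x y : α}
    (hx : Transfer M N a x) (hy : Transfer M N a y) : x = y := by
  rcases hx with ⟨b, hb, hxb⟩ | ⟨hn, rfl⟩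
  · rcases hy with ⟨b', hb', hyb⟩ | ⟨hn, rfl⟩
    · obtain rfl := h.right_unique hb hb'
      exact h'.left_unique hxb hyb
    · exact absurd hb (hn b)
  · rcases hy with ⟨b', hb', hyb⟩ | ⟨_, rfl⟩
    · exact absurd hb' (hn b')
    · rfl

lemma Transfer.symm (h' : SameShadow G H N M) {a x : α}
    (hx : Transfer M N a x) : Transfer N M x a := by
  rcases hx with ⟨b, hb, hxb⟩ | ⟨hn, rfl⟩
  · exact Or.inl ⟨b, hxb, hb⟩
  · refine Or.inr ⟨fun b hb => ?_, rfl⟩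
    obtain ⟨d, hd⟩ := h'.left hb
    exact hn d hd

/-- The transfer between two matchings with the same shadow maps edges to edges: an edge matched
in both is carried over through `H`, and any other edge has both endpoints fixed. -/
lemma Transfer.adj (h : SameShadow G H M N) (h' : SameShadow G H N M) {a c x y : α}
    (hx : Transfer M N a x) (hy : Transfer M N c y) (hac : G.Adj a c) : G.Adj x y := by
  have fixed : ∀ {a x : α}, Transfer M N a x → (∀ b, M a b → N a b) → x = a := by
    rintro a x (⟨b, hb, hxb⟩ | ⟨_, rfl⟩) hMN
    · exact h'.left_unique hxb (hMN b hb)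
    · rfl
  rcases h.edge_left hac with ⟨b, d, hab, hcd, hbd⟩ | ⟨ha, hc⟩
  · have partner : ∀ {a x : α} {b : β}, Transfer M N a x → M a b → N x b := by
      rintro a x b (⟨b', hb', hxb⟩ | ⟨hn, rfl⟩) hb
      · rwa [h.right_unique hb hb']
      · exact absurd hb (hn b)
    have hxb := partner hx hab
    have hyd := partner hy hcd
    rcases h'.edge_right hbd with ⟨a', c', ha', hc', hadj⟩ | ⟨hb, hd⟩
    · rwa [h'.left_unique hxb ha', h'.left_unique hyd hc']
    · rwa [h.left_unique (hb x hxb) hab, h.left_unique (hd y hyd) hcd]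
  · rwa [fixed hx ha, fixed hy hc]

end Transfer

/-- A family of matchings with pairwise equal shadow injects into the automorphisms of `G` fixing
two commonly matched nodes, by transfer to one fixed member of the family. -/
lemma card_le_aut {ι α β : Type*} [Finite α] (G : SimpleGraph α) (H : SimpleGraph β)
    (R : ι → α → β → Prop) (hinj : Function.Injective R)
    (h : ∀ i j, SameShadow G H (R i) (R j)) (x₁ x₂ : α) (y₁ y₂ : β)
    (h₁ : ∀ i, R i x₁ y₁) (h₂ : ∀ i, R i x₂ y₂) :
    Nat.card ι ≤ Nat.card {σ : Equiv.Perm α //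
      σ x₁ = x₁ ∧ σ x₂ = x₂ ∧ ∀ a b, G.Adj a b ↔ G.Adj (σ a) (σ b)} := by
  rcases isEmpty_or_nonempty ι with _ | ⟨⟨o⟩⟩
  · simp
  choose f hf using fun i j => Transfer.exists (h i j)
  have hff : ∀ i j a, f j i (f i j a) = a := fun i j a =>
    Transfer.unique (h j i) (h i j) (hf j i _) (Transfer.symm (h j i) (hf i j a))
  have hfix : ∀ i a b, R i a b → R o a b → f i o a = a := fun i a b hi ho =>
    Transfer.unique (h i o) (h o i) (hf i o a) (Or.inl ⟨b, hi, ho⟩)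
  refine Nat.card_le_card_of_injective (fun i =>
    ⟨⟨f i o, f o i, hff i o, hff o i⟩, hfix i _ _ (h₁ i) (h₁ o), hfix i _ _ (h₂ i) (h₂ o),
      fun a b => ⟨Transfer.adj (h i o) (h o i) (hf i o a) (hf i o b), fun hab => ?_⟩⟩) ?_
  · have := Transfer.adj (h o i) (h i o) (hf o i _) (hf o i _) hab
    simpa only [Equiv.coe_fn_mk, hff] using this
  · intro i j hij
    have hfij : f i o = f j o := by
      have := congrArg (fun σ => (σ.1 : α → α)) hij
      simpa using this
    have key : ∀ i j, f i o = f j o → ∀ a b, R i a b → R j a b := by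
      intro i j hij a b hab
      obtain ⟨b', hb'⟩ := (h i j).left hab
      -- Both partners of `a` are the partner in `R o` of the common image of `a`.
      have e1 := hf i o a
      have e2 := hf j o a
      rw [← hij] at e2
      rcases e1 with ⟨b₁, hb₁, hc₁⟩ | ⟨hn, _⟩
      · rcases e2 with ⟨b₂, hb₂, hc₂⟩ | ⟨hn, _⟩
        · obtain rfl := (h i j).right_unique hab hb₁
          rwa [(h o o).right_unique hc₁ hc₂]
        · exact absurd hb' (hn b')
      · exact absurd hab (hn b)
    apply hinj
    funext a b
    exact propext ⟨key i j hfij a b, key j i hfij.symm a b⟩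

lemma Template.adj_iff (T : Template) (a b : Fin T.v) :
    T.graph.Adj a b ↔ (a, b) ∈ T.E ∨ (b, a) ∈ T.E := by
  unfold Template.graph
  rw [SimpleGraph.fromRel_adj]
  refine ⟨fun h => h.2, fun h => ⟨?_, h⟩⟩
  rintro rfl
  rcases h with h | h <;> exact lt_irrefl _ (T.hE _ h)

/-- Matchings with equal semi-matched pairs and equal unmatched node sets satisfy `SameShadow`. -/
lemma sameShadow_of_shadow (T1 T2 : Template) (M N : Finset (Fin T1.v × Fin T2.v))
    (hM : IsMatching T1 T2 M) (hS : MSM T1 T2 M = MSM T1 T2 N)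
    (hU1 : (Finset.univ.filter fun a : Fin T1.v => ∀ p ∈ M, (p : Fin T1.v × Fin T2.v).1 ≠ a) =
      Finset.univ.filter fun a : Fin T1.v => ∀ p ∈ N, (p : Fin T1.v × Fin T2.v).1 ≠ a)
    (hU2 : (Finset.univ.filter fun b : Fin T2.v => ∀ p ∈ M, (p : Fin T1.v × Fin T2.v).2 ≠ b) =
      Finset.univ.filter fun b : Fin T2.v => ∀ p ∈ N, (p : Fin T1.v × Fin T2.v).2 ≠ b) :
    SameShadow T1.graph T2.graph (fun a b => (a, b) ∈ M) (fun a b => (a, b) ∈ N) := by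
  have semi : ∀ p ∈ M, IsSemiMatched T1 T2 M p → p ∈ N := fun p hp hs => by
    have : p ∈ MSM T1 T2 M := Finset.mem_filter.2 ⟨hp, hs⟩
    rw [hS] at this
    exact (Finset.mem_filter.1 this).1
  -- The alternatives for an edge of either template, in its stored orientation.
  have edge1 : ∀ a c, (a, c) ∈ T1.E →
      (∃ b d, (a, b) ∈ M ∧ (c, d) ∈ M ∧ T2.graph.Adj b d) ∨
      ((∀ b, (a, b) ∈ M → (a, b) ∈ N) ∧ (∀ d, (c, d) ∈ M → (c, d) ∈ N)) := by
    intro a c hac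
    by_cases he : EdgeMatched1 T1 T2 M (a, c)
    · left
      obtain ⟨⟨b, d⟩, hbd, ⟨h1, h2⟩ | ⟨h1, h2⟩⟩ := he
      · exact ⟨b, d, h1, h2, (T2.adj_iff _ _).2 (Or.inl hbd)⟩
      · exact ⟨d, b, h1, h2, (T2.adj_iff _ _).2 (Or.inr hbd)⟩
    · exact Or.inr ⟨fun b hb => semi _ hb (Or.inl ⟨_, hac, Or.inl rfl, he⟩),
        fun d hd => semi _ hd (Or.inl ⟨_, hac, Or.inr rfl, he⟩)⟩
  have edge2 : ∀ b d, (b, d) ∈ T2.E →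
      (∃ a c, (a, b) ∈ M ∧ (c, d) ∈ M ∧ T1.graph.Adj a c) ∨
      ((∀ a, (a, b) ∈ M → (a, b) ∈ N) ∧ (∀ c, (c, d) ∈ M → (c, d) ∈ N)) := by
    intro b d hbd
    by_cases he : EdgeMatched2 T1 T2 M (b, d)
    · left
      obtain ⟨⟨a, c⟩, hac, ⟨h1, h2⟩ | ⟨h1, h2⟩⟩ := he
      · exact ⟨a, c, h1, h2, (T1.adj_iff _ _).2 (Or.inl hac)⟩
      · exact ⟨c, a, h2, h1, (T1.adj_iff _ _).2 (Or.inr hac)⟩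
    · exact Or.inr ⟨fun a ha => semi _ ha (Or.inr ⟨_, hbd, Or.inl rfl, he⟩),
        fun c hc => semi _ hc (Or.inr ⟨_, hbd, Or.inr rfl, he⟩)⟩
  refine ⟨?_, ?_, ?_, ?_, ?_, ?_⟩
  · intro a b b' h1 h2
    exact congrArg Prod.snd (hM.1 _ h1 _ h2 rfl)
  · intro a a' b h1 h2
    exact congrArg Prod.fst (hM.2 _ h1 _ h2 rfl)
  · intro a b hab
    by_contra hne
    have := (Finset.ext_iff.1 hU1 a).2 (Finset.mem_filter.2 ⟨Finset.mem_univ _, by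
      rintro ⟨a', b'⟩ hp rfl
      exact hne ⟨b', hp⟩⟩)
    exact (Finset.mem_filter.1 this).2 _ hab rfl
  · intro a b hab
    by_contra hne
    have := (Finset.ext_iff.1 hU2 b).2 (Finset.mem_filter.2 ⟨Finset.mem_univ _, by
      rintro ⟨a', b'⟩ hp rfl
      exact hne ⟨a', hp⟩⟩)
    exact (Finset.mem_filter.1 this).2 _ hab rfl
  · intro a c hac
    rcases (T1.adj_iff _ _).1 hac with h | h
    · exact edge1 a c h
    · rcases edge1 c a h with ⟨b, d, h1, h2, h3⟩ | ⟨h1, h2⟩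
      · exact Or.inl ⟨d, b, h2, h1, h3.symm⟩
      · exact Or.inr ⟨h2, h1⟩
  · intro b d hbd
    rcases (T2.adj_iff _ _).1 hbd with h | h
    · exact edge2 b d h
    · rcases edge2 d b h with ⟨a, c, h1, h2, h3⟩ | ⟨h1, h2⟩
      · exact Or.inl ⟨c, a, h2, h1, h3.symm⟩
      · exact Or.inr ⟨h2, h1⟩

/-- Shadow matchings: at most `min(|Aut(G¹)|, |Aut(G²)|)` matchings share a given shadow. -/
theorem statement13 (T1 T2 : Template)
    (W1 : Finset (Fin T1.v)) (W2 : Finset (Fin T2.v))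
    (Mu : Finset (Fin T1.v × Fin T2.v)) :
    Nat.card {M : Finset (Fin T1.v × Fin T2.v) //
        IsMatching12 T1 T2 M ∧ MSM T1 T2 M = Mu ∧
        (Finset.univ.filter fun a : Fin T1.v =>
          ∀ p ∈ M, (p : Fin T1.v × Fin T2.v).1 ≠ a) = W1 ∧
        (Finset.univ.filter fun b : Fin T2.v =>
          ∀ p ∈ M, (p : Fin T1.v × Fin T2.v).2 ≠ b) = W2} ≤
      min (autCard T1) (autCard T2) := by
  have inj : Function.Injective fun (M : Finset (Fin T1.v × Fin T2.v)) a b => (a, b) ∈ M := by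
    intro M N h
    ext ⟨a, b⟩
    exact iff_of_eq (congrFun (congrFun h a) b)
  refine le_min ?_ ?_
  · refine card_le_aut T1.graph T2.graph (fun M a b => (a, b) ∈ M.1)
      (inj.comp Subtype.val_injective) (fun M N => ?_) T1.v1 T1.v2 T2.v1 T2.v2
      (fun M => M.2.1.2.1) (fun M => M.2.1.2.2)
    obtain ⟨M, hM, rfl, rfl, rfl⟩ := M
    exact sameShadow_of_shadow T1 T2 M N.1 hM.1 N.2.2.1.symm N.2.2.2.1.symm N.2.2.2.2.symm
  · refine card_le_aut T2.graph T1.graph (fun M b a => (a, b) ∈ M.1) (fun M N h => ?_)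
      (fun M N => ?_) T2.v1 T2.v2 T1.v1 T1.v2 (fun M => M.2.1.2.1) (fun M => M.2.1.2.2)
    · exact Subtype.ext (inj (congrArg Function.swap h))
    · obtain ⟨M, hM, rfl, rfl, rfl⟩ := M
      exact (sameShadow_of_shadow T1 T2 M N.1 hM.1
        N.2.2.1.symm N.2.2.2.1.symm N.2.2.2.2.symm).flip

end SBM
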